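/- Let G be a simple undirected graph on vertices {1,…,n} with adjacency matrix A_G, and let I_G ⊆ ℝ[P_{11},…,P_{nn}] (polynomial ring in n² variables P_{i,j}) be the ideal generated by the polynomials (P A_G − A_G P)_{i,j} for all i,j, ∑_{i=1}^n P_{i,j} − 1 for all j, ∑_{j=1}^n P_{i,j} − 1 for all i, and P_{i,j}² − P_{i,j} for all i,j. Let V_ℝ(I_G) = {Q ∈ ℝ^{n×n} : f(Q) = 0 for all f ∈ I_G}. Then I_G equals its vanishing ideal: I_G = {f ∈ ℝ[P_{11},…,P_{nn}] : f(Q) = 0 for all Q ∈ V_ℝ(I_G)} (in particular, I_G is real radical). -/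

import Mathlib

open MvPolynomial

/-- The `n × n` matrix of variables `P_{i,j}`. -/
noncomputable def varMat (n : ℕ) : Matrix (Fin n) (Fin n) (MvPolynomial (Fin n × Fin n) ℝ) :=
  Matrix.of fun i j => X (i, j)

/-- The matrix `P A_G - A_G P` with polynomial entries. -/
noncomputable def commMat (n : ℕ) (G : SimpleGraph (Fin n)) [DecidableRel G.Adj] :
    Matrix (Fin n) (Fin n) (MvPolynomial (Fin n × Fin n) ℝ) :=
  varMat n * (G.adjMatrix ℝ).map C - (G.adjMatrix ℝ).map C * varMat n

/-!
Equality of ideals can be tested after localizing at each maximal ideal `P`. If `P` contains `I`,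
then, being prime and containing a product of distinct factors `X i - a` for each `i`, it is the
ideal of a point `x`, and `x` lies in the zero locus of `I`. As the factors are distinct, all of
them but `X i - x i` are invertible at `P`, so `I` already generates the ideal of `x` in the
localization at `P`.
-/

theorem sub_C_eval_mem_span_X_sub_C {σ R : Type*} [CommRing R] (x : σ → R)
    (f : MvPolynomial σ R) :
    f - C (eval x f) ∈ Ideal.span (Set.range fun i => (X i - C (x i) : MvPolynomial σ R)) := by
  rw [← Ideal.Quotient.mk_eq_mk_iff_sub_mem]
  set π := Ideal.Quotient.mk (Ideal.span (Set.range fun i => (X i - C (x i) : MvPolynomial σ R)))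
  have hX (i : σ) : π (X i) = π (C (x i)) :=
    (Ideal.Quotient.mk_eq_mk_iff_sub_mem _ _).mpr (Ideal.subset_span (Set.mem_range_self i))
  suffices π = (π.comp C).comp (eval x) from DFunLike.congr_fun this f
  ext <;> simp [hX]

section SplitCoordinates

variable {σ K : Type*} [Field K] {I P : Ideal (MvPolynomial σ K)}

theorem vanishingIdeal_singleton_eq_span (x : σ → K) :
    vanishingIdeal K {x} = Ideal.span (Set.range fun i => X i - C (x i)) := by
  refine le_antisymm (fun f hf => ?_) ?_
  · have hfx : eval x f = 0 := by simpa [aeval_eq_eval] using hf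
    simpa [hfx] using sub_C_eval_mem_span_X_sub_C x f
  · rw [Ideal.span_le, Set.range_subset_iff]
    exact fun i => by simp

theorem exists_eq_vanishingIdeal_singleton [P.IsPrime] {S : σ → Finset K}
    (hS : ∀ i, ∏ a ∈ S i, (X i - C a) ∈ P) :
    ∃ x : σ → K, (∀ i, x i ∈ S i) ∧ P = vanishingIdeal K {x} := by
  choose x hxS hxP using fun i => Ideal.IsPrime.prod_mem_iff.mp (hS i)
  have hle : vanishingIdeal K {x} ≤ P := by
    rw [vanishingIdeal_singleton_eq_span, Ideal.span_le, Set.range_subset_iff]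
    exact hxP
  have hmax : (vanishingIdeal K {x}).IsMaximal := inferInstance
  exact ⟨x, hxS, (hmax.eq_of_le Ideal.IsPrime.ne_top' hle).symm⟩

theorem prod_X_sub_C_notMem_vanishingIdeal_singleton {x : σ → K} {s : Finset K} {i : σ}
    (hx : x i ∉ s) : ∏ a ∈ s, (X i - C a) ∉ vanishingIdeal K {x} := by
  simpa [Finset.prod_eq_zero_iff, sub_eq_zero] using hx

theorem vanishingIdeal_singleton_le_map_localization {x : σ → K} {S : σ → Finset K}
    (hx : ∀ i, x i ∈ S i) (hS : ∀ i, ∏ a ∈ S i, (X i - C a) ∈ I) :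
    (vanishingIdeal K {x}).map (algebraMap _ (Localization.AtPrime (vanishingIdeal K {x}))) ≤
      I.map (algebraMap _ (Localization.AtPrime (vanishingIdeal K {x}))) := by
  classical
  have hX (i : σ) : algebraMap _ (Localization.AtPrime (vanishingIdeal K {x})) (X i - C (x i)) ∈
      I.map (algebraMap _ (Localization.AtPrime (vanishingIdeal K {x}))) := by
    rw [IsLocalization.algebraMap_mem_map_algebraMap_iff (vanishingIdeal K {x}).primeCompl]
    refine ⟨_, prod_X_sub_C_notMem_vanishingIdeal_singleton (Finset.notMem_erase (x i) (S i)), ?_⟩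
    rw [Finset.prod_erase_mul _ _ (hx i)]
    exact hS i
  refine Ideal.map_le_iff_le_comap.mpr ((vanishingIdeal_singleton_eq_span x).trans_le ?_)
  rwa [Ideal.span_le, Set.range_subset_iff]

theorem vanishingIdeal_zeroLocus_of_prod_X_sub_C_mem {S : σ → Finset K}
    (hS : ∀ i, ∏ a ∈ S i, (X i - C a) ∈ I) : vanishingIdeal K (zeroLocus K I) = I := by
  refine le_antisymm (Ideal.le_of_localization_maximal fun P hP => ?_)
    (le_vanishingIdeal_zeroLocus I)
  by_cases hIP : I ≤ P
  · obtain ⟨x, hxS, rfl⟩ := exists_eq_vanishingIdeal_singleton fun i => hIP (hS i)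
    have hxI : {x} ≤ zeroLocus K I := le_zeroLocus_iff_le_vanishingIdeal.mpr hIP
    exact (Ideal.map_mono (vanishingIdeal_anti_mono hxI)).trans
      (vanishingIdeal_singleton_le_map_localization hxS hS)
  · rw [IsLocalization.AtPrime.map_eq_top_of_not_le (Localization.AtPrime P) hIP]
    exact le_top

theorem stmt_13_general (hI : ∀ i, X i ^ 2 - X i ∈ I) :
    (I : Set (MvPolynomial σ K)) =
      {f | ∀ x : σ → K, (∀ g ∈ I, eval x g = 0) → eval x f = 0} := by
  classical
  have hprod (i : σ) : ∏ a ∈ ({0, 1} : Finset K), (X i - C a) ∈ I := by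
    convert hI i using 1
    rw [Finset.prod_pair zero_ne_one, C_0, C_1]
    ring
  exact congrArg SetLike.coe (vanishingIdeal_zeroLocus_of_prod_X_sub_C_mem hprod).symm

end SplitCoordinates

theorem stmt_13 (n : ℕ) (G : SimpleGraph (Fin n)) [DecidableRel G.Adj]
    (I : Ideal (MvPolynomial (Fin n × Fin n) ℝ))
    (hI : I = Ideal.span (
      {p | ∃ i j : Fin n, p = commMat n G i j} ∪
      {p | ∃ j : Fin n, p = (∑ i, X (i, j)) - 1} ∪
      {p | ∃ i : Fin n, p = (∑ j, X (i, j)) - 1} ∪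
      {p | ∃ i j : Fin n, p = X (i, j) ^ 2 - X (i, j)})) :
    (I : Set (MvPolynomial (Fin n × Fin n) ℝ)) =
      {f | ∀ Q : Matrix (Fin n) (Fin n) ℝ,
        (∀ g ∈ I, MvPolynomial.eval (fun v => Q v.1 v.2) g = 0) →
        MvPolynomial.eval (fun v => Q v.1 v.2) f = 0} := by
  rw [stmt_13_general fun v => hI ▸ Ideal.subset_span (Or.inr ⟨v.1, v.2, rfl⟩)]
  exact Set.ext fun f => (Equiv.curry (Fin n) (Fin n) ℝ).forall_congr_left
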